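/- arXiv:1904.08213 — 3 statements merged into one kernel-verified Lean document; each statement's English description precedes it below -/
import Mathlib

section
/- Let 0 < r < R and let λ : [r,R] → ℝ be continuously differentiable, positive and nondecreasing. Suppose Φ : [r,R] → ℝ is a C¹ function with Φ > 0 on [r,R] satisfying s·λ(s)·Φ'(s) = λ(s)² − Φ(s)², and H : [r,R] → ℝ is a positive C¹ function satisfying s·λ(s)·H'(s) = H(s)·Φ(s). Set c = H(r)·Φ(r). Then for every s ∈ [r,R] one has H(s)·Φ(s) ≥ c ≥ (H(s)/Φ(s))·(Φ(s)² − λ(s)²). -/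
open Set

/-!
The product `HΦ` has derivative `Hλ/s ≥ 0`, which gives the first inequality.

For the second, put `G = HΦ - Hλ²/Φ = (H/Φ)(Φ² - λ²)`, so that `G(r) ≤ c = H(r)Φ(r)`, and
`G' = -2Hλλ'/Φ - Hλ(Φ² - λ²)/(sΦ²)`. At any point where `G = c` one has `Φ > λ` since `c > 0`, hence
`G' < 0` there because `λ' ≥ 0`. So `G` can never cross the level `c` upwards, and `G ≤ c` follows
from the comparison lemma `image_le_of_deriv_right_lt_deriv_boundary'`.
-/

/-- For a C¹, positive, nondecreasing weight `lam` on `[r,R]`, a positive C¹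
solution `Φ` of `s·λ·Φ' = λ² − Φ²` and a positive C¹ solution `H` of `s·λ·H' = H·Φ`, the
constant `c = H(r)·Φ(r)` satisfies `H(s)·Φ(s) ≥ c ≥ (H(s)/Φ(s))·(Φ(s)² − λ(s)²)` for every
`s ∈ [r,R]`. -/
theorem stmt_11 (r R : ℝ) (hr : 0 < r) (hrR : r < R)
    (lam Φ Φ' H H' : ℝ → ℝ)
    (hlamC1 : ContDiffOn ℝ 1 lam (Icc r R))
    (hlampos : ∀ s ∈ Icc r R, 0 < lam s)
    (hlammono : MonotoneOn lam (Icc r R))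
    (hΦd : ∀ s ∈ Icc r R, HasDerivWithinAt Φ (Φ' s) (Icc r R) s)
    (hΦ'c : ContinuousOn Φ' (Icc r R))
    (hΦpos : ∀ s ∈ Icc r R, 0 < Φ s)
    (hΦode : ∀ s ∈ Icc r R, s * lam s * Φ' s = lam s ^ 2 - Φ s ^ 2)
    (hHd : ∀ s ∈ Icc r R, HasDerivWithinAt H (H' s) (Icc r R) s)
    (hH'c : ContinuousOn H' (Icc r R))
    (hHpos : ∀ s ∈ Icc r R, 0 < H s)
    (hHode : ∀ s ∈ Icc r R, s * lam s * H' s = H s * Φ s) :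
    ∀ s ∈ Icc r R,
      H s * Φ s ≥ H r * Φ r ∧
      H r * Φ r ≥ H s / Φ s * (Φ s ^ 2 - lam s ^ 2) := by
  have hpos : ∀ s ∈ Icc r R, 0 < s := fun s hs => hr.trans_le hs.1
  have hΦ' : ∀ s ∈ Icc r R, Φ' s = (lam s ^ 2 - Φ s ^ 2) / (s * lam s) := fun s hs => by
    have := mul_pos (hpos s hs) (hlampos s hs)
    rw [eq_div_iff this.ne', ← hΦode s hs]; ring
  have hH' : ∀ s ∈ Icc r R, H' s = H s * Φ s / (s * lam s) := fun s hs => by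
    have := mul_pos (hpos s hs) (hlampos s hs)
    rw [eq_div_iff this.ne', ← hHode s hs]; ring
  have hrmem : r ∈ Icc r R := ⟨le_rfl, hrR.le⟩
  have hmono : MonotoneOn (fun s => H s * Φ s) (Icc r R) := by
    have hd : ∀ s ∈ Icc r R, HasDerivWithinAt (fun s => H s * Φ s) (H s * lam s / s)
        (Icc r R) s := fun s hs => by
      refine ((hHd s hs).mul (hΦd s hs)).congr_deriv ?_
      have h1 := (hpos s hs).ne'
      have h2 := (hlampos s hs).ne'
      rw [hH' s hs, hΦ' s hs]
      field_simp
      ring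
    refine monotoneOn_of_hasDerivWithinAt_nonneg (convex_Icc r R)
      (fun s hs => (hd s hs).continuousWithinAt)
      (fun s hs => (hd s (interior_subset hs)).mono interior_subset) fun s hs => ?_
    have hs := interior_subset hs
    have h1 := hpos s hs
    have h2 := hlampos s hs
    have h3 := hHpos s hs
    positivity
  have hlamd : ∀ s ∈ Icc r R,
      HasDerivWithinAt lam (derivWithin lam (Icc r R) s) (Icc r R) s := fun s hs =>
    (hlamC1.differentiableOn one_ne_zero s hs).hasDerivWithinAt
  have hGd : ∀ s ∈ Icc r R, HasDerivWithinAt (fun s => H s / Φ s * (Φ s ^ 2 - lam s ^ 2))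
      (-(2 * H s * lam s * derivWithin lam (Icc r R) s / Φ s)
        - H s * lam s * (Φ s ^ 2 - lam s ^ 2) / (s * Φ s ^ 2)) (Icc r R) s := fun s hs => by
    have h1 := (hpos s hs).ne'
    have h2 := (hlampos s hs).ne'
    have h3 := (hΦpos s hs).ne'
    refine (((hHd s hs).div (hΦd s hs) h3).mul
      (((hΦd s hs).pow 2).sub ((hlamd s hs).pow 2))).congr_deriv ?_
    simp only [Pi.div_apply, Pi.sub_apply, Pi.pow_apply]
    rw [hH' s hs, hΦ' s hs]
    field_simp
    push_cast
    ring
  have hG : ∀ ⦃s⦄, s ∈ Icc r R → H s / Φ s * (Φ s ^ 2 - lam s ^ 2) ≤ H r * Φ r := by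
    refine image_le_of_deriv_right_lt_deriv_boundary'
      (fun s hs => (hGd s hs).continuousWithinAt)
      (fun s hs => (hGd s (Ico_subset_Icc_self hs)).mono_of_mem_nhdsWithin
        (Icc_mem_nhdsGE_of_mem hs)) ?_
      (B := fun _ => H r * Φ r) (B' := fun _ => 0) continuousOn_const
      (fun s _ => hasDerivWithinAt_const _ _ _) ?_
    · have h1 := hHpos r hrmem
      have h2 := hΦpos r hrmem
      have h3 : H r / Φ r * (Φ r ^ 2 - lam r ^ 2) = H r * Φ r - H r * lam r ^ 2 / Φ r := by
        field_simp
      have h4 : 0 ≤ H r * lam r ^ 2 / Φ r := by positivity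
      linarith
    · intro s hs heq
      have hs := Ico_subset_Icc_self hs
      have h1 := hpos s hs
      have h2 := hlampos s hs
      have h3 := hHpos s hs
      have h4 := hΦpos s hs
      have hc : 0 < H s / Φ s * (Φ s ^ 2 - lam s ^ 2) :=
        heq ▸ mul_pos (hHpos r hrmem) (hΦpos r hrmem)
      have h5 : 0 < Φ s ^ 2 - lam s ^ 2 := pos_of_mul_pos_right hc (by positivity)
      have h6 : 0 ≤ derivWithin lam (Icc r R) s := hlammono.derivWithin_nonneg
      have h7 : 0 ≤ 2 * H s * lam s * derivWithin lam (Icc r R) s / Φ s := by positivity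
      have h8 : 0 < H s * lam s * (Φ s ^ 2 - lam s ^ 2) / (s * Φ s ^ 2) := by positivity
      linarith
  exact fun s hs => ⟨hmono hrmem hs hs.1, hG hs⟩
end

section
/- Let 0 < r < R and let λ : [r,R] → ℝ be continuously differentiable, positive and nondecreasing. Suppose Φ : [r,R] → ℝ is a C¹ function with Φ > 0 on [r,R] satisfying s·λ(s)·Φ'(s) = λ(s)² − Φ(s)², and H : [r,R] → ℝ is a positive C¹ function satisfying s·λ(s)·H'(s) = H(s)·Φ(s). Set c = H(r)·Φ(r) and τ(s) = Φ(s) − c/H(s). Then for every s ∈ [r,R]: τ(s) ≥ 0, τ'(s) ≥ 0, λ(s)/s − τ'(s) ≥ 0, and s·λ(s)·H'(s) − c ≥ 0. -/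
/-!
The two ODEs give `(H Φ)' = H λ / s ≥ 0`, so `P = H Φ` is nondecreasing and `P ≥ P(r) = c`;
since `s λ H' = P` and `τ = (P - c) / H`, this settles the first and the last claim. Moreover
`τ' = (λ² - Φ τ) / (s λ)`, so `λ / s - τ' = Φ τ / (s λ) ≥ 0`.

It remains to see `Φ τ ≤ λ²`, i.e. that `G = λ² H² - P² + c P` is nonnegative. This holds at `r`,
where `G = λ² H²`, and `G' = 2 λ λ' H² + c H λ / s ≥ 0`, because `λ' ≥ 0` and
`2 λ² H H' = 2 λ H P / s = 2 P P'`.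
-/

open Set

/-- For a C¹, positive, nondecreasing weight `lam` on `[r,R]`, a positive C¹
solution `Φ` of `s·λ·Φ' = λ² − Φ²` and a positive C¹ solution `H` of `s·λ·H' = H·Φ`, with
`c = H(r)·Φ(r)` and `τ(s) = Φ(s) − c/H(s)` (whose derivative is `τ' = Φ' + c·H'/H²`), one has
`τ(s) ≥ 0`, `τ'(s) ≥ 0`, `λ(s)/s − τ'(s) ≥ 0` and `s·λ(s)·H'(s) − c ≥ 0` on `[r,R]`. -/
theorem stmt_12 (r R : ℝ) (hr : 0 < r) (hrR : r < R)
    (lam Φ Φ' H H' : ℝ → ℝ) (c : ℝ)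
    (hlamC1 : ContDiffOn ℝ 1 lam (Icc r R))
    (hlampos : ∀ s ∈ Icc r R, 0 < lam s)
    (hlammono : MonotoneOn lam (Icc r R))
    (hΦd : ∀ s ∈ Icc r R, HasDerivWithinAt Φ (Φ' s) (Icc r R) s)
    (hΦ'c : ContinuousOn Φ' (Icc r R))
    (hΦpos : ∀ s ∈ Icc r R, 0 < Φ s)
    (hΦode : ∀ s ∈ Icc r R, s * lam s * Φ' s = lam s ^ 2 - Φ s ^ 2)
    (hHd : ∀ s ∈ Icc r R, HasDerivWithinAt H (H' s) (Icc r R) s)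
    (hH'c : ContinuousOn H' (Icc r R))
    (hHpos : ∀ s ∈ Icc r R, 0 < H s)
    (hHode : ∀ s ∈ Icc r R, s * lam s * H' s = H s * Φ s)
    (hc : c = H r * Φ r) :
    ∀ s ∈ Icc r R,
      0 ≤ Φ s - c / H s ∧
      0 ≤ Φ' s + c * H' s / H s ^ 2 ∧
      Φ' s + c * H' s / H s ^ 2 ≤ lam s / s ∧
      0 ≤ s * lam s * H' s - c := by
  have hrm : r ∈ Icc r R := ⟨le_rfl, hrR.le⟩
  have hspos : ∀ s ∈ Icc r R, 0 < s := fun s hs => lt_of_lt_of_le hr hs.1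
  have hcpos : 0 < c := hc ▸ mul_pos (hHpos r hrm) (hΦpos r hrm)
  have hPd : ∀ s ∈ Icc r R,
      HasDerivWithinAt (fun s => H s * Φ s) (H s * lam s / s) (Icc r R) s := by
    intro s hs
    have h := (hHd s hs).mul (hΦd s hs)
    have hs0 := hspos s hs
    have hl0 := hlampos s hs
    have e : H' s * Φ s + H s * Φ' s = H s * lam s / s := by
      rw [eq_div_iff hs0.ne']
      apply mul_left_cancel₀ hl0.ne'
      linear_combination Φ s * hHode s hs + H s * hΦode s hs
    rw [← e]
    exact h
  have hPmono : MonotoneOn (fun s => H s * Φ s) (Icc r R) := by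
    refine monotoneOn_of_hasDerivWithinAt_nonneg (convex_Icc r R)
      (fun s hs => (hPd s hs).continuousWithinAt)
      (fun s hs => (hPd s (interior_subset hs)).mono interior_subset) (fun s hs => ?_)
    have hs := interior_subset hs
    have := hspos s hs
    have := hlampos s hs
    have := hHpos s hs
    positivity
  have hGd : ∀ s ∈ Icc r R,
      HasDerivWithinAt (fun s => (lam s * H s) ^ 2 - (H s * Φ s) ^ 2 + c * (H s * Φ s))
        (2 * lam s * derivWithin lam (Icc r R) s * H s ^ 2 + c * (H s * lam s / s))
        (Icc r R) s := by
    intro s hs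
    have hl := (hlamC1.differentiableOn one_ne_zero s hs).hasDerivWithinAt
    have h := (((hl.mul (hHd s hs)).pow 2).sub ((hPd s hs).pow 2)).add ((hPd s hs).const_mul c)
    have hs0 := hspos s hs
    have e : lam s * H' s = H s * Φ s / s := by
      rw [eq_div_iff hs0.ne']
      linear_combination hHode s hs
    refine h.congr_deriv ?_
    simp only [Pi.mul_apply]
    push_cast
    rw [e]
    ring
  have hGmono : MonotoneOn
      (fun s => (lam s * H s) ^ 2 - (H s * Φ s) ^ 2 + c * (H s * Φ s)) (Icc r R) := by
    refine monotoneOn_of_hasDerivWithinAt_nonneg (convex_Icc r R)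
      (fun s hs => (hGd s hs).continuousWithinAt)
      (fun s hs => (hGd s (interior_subset hs)).mono interior_subset) (fun s hs => ?_)
    have hs := interior_subset hs
    have := hspos s hs
    have := hlampos s hs
    have := hHpos s hs
    have : 0 ≤ derivWithin lam (Icc r R) s := hlammono.derivWithin_nonneg
    positivity
  intro s hs
  have hs0 := hspos s hs
  have hl0 := hlampos s hs
  have hH0 := hHpos s hs
  have hΦ0 := hΦpos s hs
  have hP : c ≤ H s * Φ s := hc ▸ hPmono hrm hs hs.1
  have hG : 0 ≤ (lam s * H s) ^ 2 - (H s * Φ s) ^ 2 + c * (H s * Φ s) := by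
    refine le_trans ?_ (hGmono hrm hs hs.1)
    simp only [← hc]
    nlinarith [sq_nonneg (lam r * H r)]
  have hτ : 0 ≤ Φ s - c / H s := by
    rw [sub_nonneg, div_le_iff₀ hH0]
    linarith
  have hH' : H' s = H s * Φ s / (s * lam s) := by
    rw [eq_div_iff (by positivity)]
    linear_combination hHode s hs
  have hΦ' : Φ' s = (lam s ^ 2 - Φ s ^ 2) / (s * lam s) := by
    rw [eq_div_iff (by positivity)]
    linear_combination hΦode s hs
  refine ⟨hτ, ?_, ?_, ?_⟩
  · have e : Φ' s + c * H' s / H s ^ 2 =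
        ((lam s * H s) ^ 2 - (H s * Φ s) ^ 2 + c * (H s * Φ s)) / (s * lam s * H s ^ 2) := by
      rw [hH', hΦ']
      field_simp
    rw [e]
    positivity
  · have e : lam s / s - (Φ' s + c * H' s / H s ^ 2) =
        Φ s * (Φ s - c / H s) / (s * lam s) := by
      rw [hH', hΦ']
      field_simp
      ring
    rw [← sub_nonneg, e]
    positivity
  · rw [hHode s hs]
    linarith
end

section
/- Let 0 < r < R and 0 < r_* < R_*, let τ : [r,R] → ℝ be C¹, and let h be an orientation-preserving C¹ diffeomorphism from the annulus A(r,R) onto A(r_*,R_*) that extends as a C¹ map to the closed annulus with |h(z)| = r_* when |z| = r and |h(z)| = R_* when |z| = R and which preserves the order of the boundary components (so each boundary circle is mapped with degree 1). Writing h = h(s·e^{iθ}) in polar coordinates, one has the identity ∫_0^{2π} ∫_r^R [ τ'(s)·Im(conj(h)·h_θ) + 2·τ(s)·Im(conj(h_s)·h_θ) ] ds dθ = 2π·(τ(R)·R_*² − τ(r)·r_*²). -/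
open Set MeasureTheory

/-!
Write `H(s,θ) = h(s e^{iθ})` and `M(s) = ∫_0^{2π} Im(conj H · H_θ) dθ`. The point is that
`M' = 2 ∫_0^{2π} Im(conj H_s · H_θ) dθ` although `H` is only `C¹`, so that differentiating under the
integral sign (which would need `H_θs`) is not available. Instead, the bilinear form
`B(f,g) = ∫_0^{2π} Im(conj f · g')` is symmetric on periodic functions by integration by parts
(`angular_form_symm`), whence `M(t) - M(s) = B(H_t - H_s, H_t + H_s)`. This contains no mixed
derivative; dividing by `t - s` and letting `t → s` gives the formula (`hasDerivAt_angular`).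

The claim is then the fundamental theorem of calculus for `τ M`, after exchanging the order of
integration (`free_lagrangian_polar`). On a circle with `|h| = ρ` one has
`Im(conj h · h_θ) = ρ² Im(h_θ / h)`, so the degree hypotheses give `M = 2πρ²` at both ends.

To work with globally continuous functions, the radius is clamped to `[r,R]` with `projIcc`.
-/

/-- Symmetry of `(f,g) ↦ ∫ Im(conj f · g')` on functions taking equal values at both ends. -/
lemma angular_form_symm {f g f' g' : ℝ → ℂ} {b : ℝ}
    (hf : ∀ x, HasDerivAt f (f' x) x) (hg : ∀ x, HasDerivAt g (g' x) x)
    (hf' : Continuous f') (hg' : Continuous g') (hfp : f b = f 0) (hgp : g b = g 0) :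
    ∫ x in (0:ℝ)..b, ((starRingEnd ℂ) (f x) * g' x).im =
      ∫ x in (0:ℝ)..b, ((starRingEnd ℂ) (g x) * f' x).im := by
  have hfc : Continuous f := continuous_iff_continuousAt.2 fun x => (hf x).continuousAt
  have hgc : Continuous g := continuous_iff_continuousAt.2 fun x => (hg x).continuousAt
  have hd : ∀ x, HasDerivAt (fun x => ((starRingEnd ℂ) (f x) * g x).im)
      (((starRingEnd ℂ) (f x) * g' x).im - ((starRingEnd ℂ) (g x) * f' x).im) x := by
    intro x
    have h1 : HasDerivAt (fun x => (starRingEnd ℂ) (f x)) ((starRingEnd ℂ) (f' x)) x :=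
      Complex.conjCLE.toContinuousLinearMap.hasFDerivAt.comp_hasDerivAt x (hf x)
    have h2 := Complex.imCLM.hasFDerivAt.comp_hasDerivAt x (h1.mul (hg x))
    refine h2.congr_deriv ?_
    simp only [Complex.imCLM_apply, Complex.add_im, Complex.mul_im, Complex.conj_re,
      Complex.conj_im]
    ring
  have key := intervalIntegral.integral_eq_sub_of_hasDerivAt (a := 0) (b := b)
    (fun x _ => hd x) (Continuous.intervalIntegrable (by fun_prop) _ _)
  rw [intervalIntegral.integral_sub (Continuous.intervalIntegrable (by fun_prop) _ _)
    (Continuous.intervalIntegrable (by fun_prop) _ _), hfp, hgp, sub_self] at key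
  linarith

/-- The derivative of `s ↦ ∫ Im(conj F · F_θ) dθ` for a `C¹` function `F`, periodic in `θ`, with
`G = F_θ` and `K = F_s`. -/
lemma hasDerivAt_angular {F G K : ℝ → ℝ → ℂ} {r R b : ℝ}
    (hF : Continuous (Function.uncurry F)) (hG : Continuous (Function.uncurry G))
    (hK : Continuous (Function.uncurry K))
    (hFθ : ∀ s θ, HasDerivAt (F s) (G s θ) θ)
    (hFs : ∀ s ∈ Ioo r R, ∀ θ, HasDerivAt (fun t => F t θ) (K s θ) s)
    (hper : ∀ s, F s b = F s 0) {s : ℝ} (hs : s ∈ Ioo r R) :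
    HasDerivAt (fun t => ∫ θ in (0:ℝ)..b, ((starRingEnd ℂ) (F t θ) * G t θ).im)
      (∫ θ in (0:ℝ)..b, 2 * ((starRingEnd ℂ) (K s θ) * G s θ).im) s := by
  -- `D t θ` is the difference quotient `(F t θ - F s θ) / (t - s)`, continuous up to `t = s`.
  set D : ℝ → ℝ → ℂ := fun t θ => ∫ u in (0:ℝ)..1, K (s + u * (t - s)) θ with hD
  have hDc : Continuous (Function.uncurry D) := by
    have : Continuous (Function.uncurry fun (p : ℝ × ℝ) (u : ℝ) => K (s + u * (p.1 - s)) p.2) :=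
      hK.comp (f := fun q : (ℝ × ℝ) × ℝ => (s + q.2 * (q.1.1 - s), q.1.2)) (by fun_prop)
    exact intervalIntegral.continuous_parametric_intervalIntegral_of_continuous' this 0 1
  have hDeq : ∀ t ∈ Ioo r R, ∀ θ, F t θ - F s θ = ((t - s : ℝ) : ℂ) * D t θ := by
    intro t ht θ
    have hmem : ∀ u ∈ uIcc (0:ℝ) 1, s + u * (t - s) ∈ Ioo r R := by
      intro u hu
      rw [uIcc_of_le zero_le_one] at hu
      have := (convex_Ioo r R).add_smul_sub_mem hs ht hu
      simpa using this
    have hd : ∀ u ∈ uIcc (0:ℝ) 1, HasDerivAt (fun u : ℝ => F (s + u * (t - s)) θ)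
        ((t - s) • K (s + u * (t - s)) θ) u := by
      intro u hu
      have h1 : HasDerivAt (fun u : ℝ => s + u * (t - s)) (t - s) u := by
        simpa using ((hasDerivAt_id u).mul_const (t - s)).const_add s
      exact (hFs _ (hmem u hu) θ).scomp u h1
    have hc : Continuous fun u : ℝ => K (s + u * (t - s)) θ :=
      hK.comp (f := fun u : ℝ => (s + u * (t - s), θ)) (by fun_prop)
    have := intervalIntegral.integral_eq_sub_of_hasDerivAt hd
      (Continuous.intervalIntegrable (by fun_prop) _ _)
    rw [intervalIntegral.integral_smul] at this
    simp only [one_mul, zero_mul, add_zero, add_sub_cancel, Complex.real_smul] at this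
    exact this.symm
  have hDs : ∀ θ, D s θ = K s θ := by intro θ; simp [hD]
  set Φ : ℝ → ℝ := fun t => ∫ θ in (0:ℝ)..b, ((starRingEnd ℂ) (D t θ) * (G t θ + G s θ)).im
    with hΦ
  have hGs : ∀ t, Continuous (G t) := fun t => hG.comp (f := fun θ => (t, θ)) (by fun_prop)
  have hFs' : ∀ t, Continuous (F t) := fun t => hF.comp (f := fun θ => (t, θ)) (by fun_prop)
  have hΦc : Continuous Φ := by
    apply intervalIntegral.continuous_parametric_intervalIntegral_of_continuous'
    have h1 : Continuous fun p : ℝ × ℝ => D p.1 p.2 := hDc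
    have h2 : Continuous fun p : ℝ × ℝ => G p.1 p.2 := hG
    have h3 : Continuous fun p : ℝ × ℝ => G s p.2 := (hGs s).comp continuous_snd
    exact Complex.continuous_im.comp ((Complex.continuous_conj.comp h1).mul (h2.add h3))
  have hM : ∀ t ∈ Ioo r R, (∫ θ in (0:ℝ)..b, ((starRingEnd ℂ) (F t θ) * G t θ).im) -
      (∫ θ in (0:ℝ)..b, ((starRingEnd ℂ) (F s θ) * G s θ).im) = (t - s) * Φ t := by
    intro t ht
    have hsym := angular_form_symm (b := b) (hFθ t) (hFθ s) (hGs t) (hGs s) (hper t) (hper s)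
    have hexp : (t - s) * Φ t = ∫ θ in (0:ℝ)..b,
        ((((starRingEnd ℂ) (F t θ) * G t θ).im - ((starRingEnd ℂ) (F s θ) * G s θ).im) +
        (((starRingEnd ℂ) (F t θ) * G s θ).im - ((starRingEnd ℂ) (F s θ) * G t θ).im)) := by
      rw [hΦ, ← intervalIntegral.integral_const_mul]
      refine intervalIntegral.integral_congr fun θ _ => ?_
      have h1 : (t - s) * ((starRingEnd ℂ) (D t θ) * (G t θ + G s θ)).im =
          ((starRingEnd ℂ) (((t - s : ℝ) : ℂ) * D t θ) * (G t θ + G s θ)).im := by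
        rw [map_mul, Complex.conj_ofReal, mul_assoc, Complex.im_ofReal_mul]
      rw [h1, ← hDeq t ht θ]
      simp only [map_sub, Complex.sub_im, Complex.add_im, Complex.mul_im, Complex.conj_re,
        Complex.conj_im, Complex.sub_re, Complex.add_re]
      ring
    have hi : ∀ x y, IntervalIntegrable (fun θ => ((starRingEnd ℂ) (F x θ) * G y θ).im)
        volume 0 b := by
      intro x y
      have := hFs' x
      have := hGs y
      exact Continuous.intervalIntegrable (by fun_prop) _ _
    rw [hexp, intervalIntegral.integral_add ((hi _ _).sub (hi _ _)) ((hi _ _).sub (hi _ _)),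
      intervalIntegral.integral_sub (hi _ _) (hi _ _),
      intervalIntegral.integral_sub (hi _ _) (hi _ _), hsym]
    ring
  have hval : (∫ θ in (0:ℝ)..b, 2 * ((starRingEnd ℂ) (K s θ) * G s θ).im) = Φ s := by
    refine intervalIntegral.integral_congr fun θ _ => ?_
    simp only [hDs, ← two_mul]
    simp
    ring
  rw [hval, hasDerivAt_iff_tendsto_slope]
  refine ((hΦc.tendsto s).mono_left nhdsWithin_le_nhds).congr' ?_
  filter_upwards [self_mem_nhdsWithin, nhdsWithin_le_nhds (Ioo_mem_nhds hs.1 hs.2)] with t hne ht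
  rw [slope_def_field, hM t ht, mul_div_cancel_left₀ _ (sub_ne_zero.2 hne)]

/-- The identity in polar coordinates, with the boundary terms left as integrals. -/
lemma free_lagrangian_polar {F G K : ℝ → ℝ → ℂ} {τ τ' : ℝ → ℝ} {r R b : ℝ} (hrR : r ≤ R)
    (hF : Continuous (Function.uncurry F)) (hG : Continuous (Function.uncurry G))
    (hK : Continuous (Function.uncurry K))
    (hFθ : ∀ s θ, HasDerivAt (F s) (G s θ) θ)
    (hFs : ∀ s ∈ Ioo r R, ∀ θ, HasDerivAt (fun t => F t θ) (K s θ) s)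
    (hper : ∀ s, F s b = F s 0)
    (hτ : Continuous τ) (hτ' : Continuous τ') (hτd : ∀ s ∈ Ioo r R, HasDerivAt τ (τ' s) s) :
    (∫ θ in (0:ℝ)..b, ∫ s in r..R, (τ' s * ((starRingEnd ℂ) (F s θ) * G s θ).im +
        2 * τ s * ((starRingEnd ℂ) (K s θ) * G s θ).im)) =
      τ R * (∫ θ in (0:ℝ)..b, ((starRingEnd ℂ) (F R θ) * G R θ).im) -
      τ r * (∫ θ in (0:ℝ)..b, ((starRingEnd ℂ) (F r θ) * G r θ).im) := by
  have hF' : Continuous fun p : ℝ × ℝ => F p.1 p.2 := hF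
  have hG' : Continuous fun p : ℝ × ℝ => G p.1 p.2 := hG
  have hK' : Continuous fun p : ℝ × ℝ => K p.1 p.2 := hK
  have c1 : Continuous fun p : ℝ × ℝ => ((starRingEnd ℂ) (F p.1 p.2) * G p.1 p.2).im := by
    fun_prop
  have c2 : Continuous fun p : ℝ × ℝ => ((starRingEnd ℂ) (K p.1 p.2) * G p.1 p.2).im := by
    fun_prop
  have hMc := intervalIntegral.continuous_parametric_intervalIntegral_of_continuous'
    (f := fun s θ => ((starRingEnd ℂ) (F s θ) * G s θ).im) (μ := volume) c1 0 b
  have hNc := intervalIntegral.continuous_parametric_intervalIntegral_of_continuous'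
    (f := fun s θ => 2 * ((starRingEnd ℂ) (K s θ) * G s θ).im) (μ := volume)
    (c2.const_mul 2) 0 b
  have hint : Continuous fun p : ℝ × ℝ => τ' p.1 * ((starRingEnd ℂ) (F p.1 p.2) * G p.1 p.2).im +
        2 * τ p.1 * ((starRingEnd ℂ) (K p.1 p.2) * G p.1 p.2).im := by
    fun_prop
  have hswap := intervalIntegral_intervalIntegral_swap (a := 0) (b := b) (c := r) (d := R)
    (F := fun θ s => τ' s * ((starRingEnd ℂ) (F s θ) * G s θ).im +
        2 * τ s * ((starRingEnd ℂ) (K s θ) * G s θ).im)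
    (((hint.comp continuous_swap).continuousOn.integrableOn_compact
      (isCompact_uIcc.prod isCompact_uIcc)).mono_set
      (prod_mono uIoc_subset_uIcc uIoc_subset_uIcc))
  have hftc := intervalIntegral.integral_eq_sub_of_hasDerivAt_of_le hrR
    (hτ.mul hMc).continuousOn
    (fun s hs => (hτd s hs).mul (hasDerivAt_angular hF hG hK hFθ hFs hper hs))
    (Continuous.intervalIntegrable ((hτ'.mul hMc).add (hτ.mul hNc)) _ _)
  refine hswap.trans (Eq.trans ?_ hftc)
  refine intervalIntegral.integral_congr fun s _ => ?_
  have e1 : Continuous fun θ => ((starRingEnd ℂ) (F s θ) * G s θ).im :=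
    c1.comp (f := fun θ => (s, θ)) (by fun_prop)
  have e2 : Continuous fun θ => ((starRingEnd ℂ) (K s θ) * G s θ).im :=
    c2.comp (f := fun θ => (s, θ)) (by fun_prop)
  rw [intervalIntegral.integral_add (Continuous.intervalIntegrable (by fun_prop) _ _)
    (Continuous.intervalIntegrable (by fun_prop) _ _), intervalIntegral.integral_const_mul,
    intervalIntegral.integral_const_mul, intervalIntegral.integral_const_mul]
  ring

/-- If `f` has modulus `ρ` and winds once around the origin, with `g` in the role of `f_θ`, then
`∫ Im(conj f · f_θ) dθ = 2πρ²`, since `conj f · g = ρ² g / f`. -/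
lemma angular_boundary {f g : ℝ → ℂ} {ρ : ℝ} (hρ : 0 < ρ) (hf : ∀ θ, ‖f θ‖ = ρ)
    (hdeg : (1 / (2 * Real.pi)) * (∫ θ in (0:ℝ)..(2 * Real.pi), (g θ / f θ).im) = 1) :
    (∫ θ in (0:ℝ)..(2 * Real.pi), ((starRingEnd ℂ) (f θ) * g θ).im) = 2 * Real.pi * ρ ^ 2 := by
  have hI : (∫ θ in (0:ℝ)..(2 * Real.pi), (g θ / f θ).im) = 2 * Real.pi := by
    have := Real.pi_pos
    field_simp at hdeg
    linarith
  refine Eq.trans ?_ (congrArg (· * ρ ^ 2) hI)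
  rw [← intervalIntegral.integral_mul_const]
  refine intervalIntegral.integral_congr fun θ _ => ?_
  have hne : f θ ≠ 0 := norm_pos_iff.1 (by rw [hf θ]; exact hρ)
  have : (starRingEnd ℂ) (f θ) * g θ = ((ρ ^ 2 : ℝ) : ℂ) * (g θ / f θ) := by
    rw [← hf θ, ← Complex.normSq_eq_norm_sq, Complex.normSq_eq_conj_mul_self]
    field_simp
  rw [this, Complex.im_ofReal_mul, mul_comm]

/-- Free-Lagrangian identity. For a C¹ function `τ` on `[r,R]` and an
orientation-preserving C¹ diffeomorphism `h` of `A(r,R)` onto `A(r_*,R_*)` extending as a C¹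
map to the closed annulus, with `|h| = r_*` on `|z| = r`, `|h| = R_*` on `|z| = R`, and
mapping each boundary circle with degree `1` (winding number of the image circles about the
origin equal to `1`), writing `h_s(s,θ)` and `h_θ(s,θ)` for the partial derivatives of
`(s,θ) ↦ h(s·e^{iθ})`, one has
`∫_0^{2π} ∫_r^R [τ'(s)·Im(conj(h)·h_θ) + 2·τ(s)·Im(conj(h_s)·h_θ)] ds dθ
  = 2π·(τ(R)·R_*² − τ(r)·r_*²)`. -/
theorem stmt_17 (r R rs Rs : ℝ) (hr : 0 < r) (hrR : r < R) (hrs : 0 < rs) (hrsRs : rs < Rs)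
    (τ τ' : ℝ → ℝ)
    (hτd : ∀ s ∈ Icc r R, HasDerivWithinAt τ (τ' s) (Icc r R) s)
    (hτ'c : ContinuousOn τ' (Icc r R))
    (h : ℂ → ℂ) (hs hθ : ℝ → ℝ → ℂ)
    (hC : ContDiffOn ℝ 1 h (Metric.closedBall 0 R \ Metric.ball 0 r))
    (hbij : BijOn h {z : ℂ | r < ‖z‖ ∧ ‖z‖ < R} {w : ℂ | rs < ‖w‖ ∧ ‖w‖ < Rs})
    (hhs : ∀ s ∈ Icc r R, ∀ θ : ℝ,
      HasDerivWithinAt (fun t : ℝ => h ((t : ℂ) * Complex.exp ((θ : ℂ) * Complex.I)))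
        (hs s θ) (Icc r R) s)
    (hhθ : ∀ s ∈ Icc r R, ∀ θ : ℝ,
      HasDerivAt (fun ψ : ℝ => h ((s : ℂ) * Complex.exp ((ψ : ℂ) * Complex.I)))
        (hθ s θ) θ)
    (hscont : ContinuousOn (fun p : ℝ × ℝ => hs p.1 p.2) (Icc r R ×ˢ univ))
    (hθcont : ContinuousOn (fun p : ℝ × ℝ => hθ p.1 p.2) (Icc r R ×ˢ univ))
    (horient : ∀ s ∈ Ioo r R, ∀ θ : ℝ, 0 < ((starRingEnd ℂ) (hs s θ) * hθ s θ).im)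
    (hinner : ∀ z : ℂ, ‖z‖ = r → ‖h z‖ = rs)
    (houter : ∀ z : ℂ, ‖z‖ = R → ‖h z‖ = Rs)
    (hdeg_in : (1 / (2 * Real.pi)) *
      (∫ θ in (0:ℝ)..(2 * Real.pi),
        (hθ r θ / h ((r : ℂ) * Complex.exp ((θ : ℂ) * Complex.I))).im) = 1)
    (hdeg_out : (1 / (2 * Real.pi)) *
      (∫ θ in (0:ℝ)..(2 * Real.pi),
        (hθ R θ / h ((R : ℂ) * Complex.exp ((θ : ℂ) * Complex.I))).im) = 1) :
    (∫ θ in (0:ℝ)..(2 * Real.pi), ∫ s in r..R,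
        (τ' s * ((starRingEnd ℂ) (h ((s : ℂ) * Complex.exp ((θ : ℂ) * Complex.I))) *
            hθ s θ).im +
          2 * τ s * ((starRingEnd ℂ) (hs s θ) * hθ s θ).im)) =
      2 * Real.pi * (τ R * Rs ^ 2 - τ r * rs ^ 2) := by
  -- `c` clamps the radius to `[r,R]`.
  set c : ℝ → ℝ := fun s => (projIcc r R hrR.le s : ℝ) with hc
  have hcc : Continuous c := continuous_subtype_val.comp continuous_projIcc
  have hcm : ∀ s, c s ∈ Icc r R := fun s => (projIcc r R hrR.le s).2
  have hce : ∀ s ∈ Icc r R, c s = s := fun s hs' => by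
    simp only [hc, projIcc_of_mem hrR.le hs']
  have hnear : ∀ s ∈ Ioo r R, ∀ᶠ t in nhds s, c t = t := fun s hs' => by
    filter_upwards [Ioo_mem_nhds hs'.1 hs'.2] with t ht using hce t (Ioo_subset_Icc_self ht)
  have hnorm : ∀ s θ : ℝ, 0 ≤ s → ‖(s : ℂ) * Complex.exp ((θ : ℂ) * Complex.I)‖ = s := by
    intro s θ h0
    rw [norm_mul, Complex.norm_exp_ofReal_mul_I, mul_one, Complex.norm_real,
      Real.norm_of_nonneg h0]
  have hτc : ContinuousOn τ (Icc r R) := fun s hs' => (hτd s hs').continuousWithinAt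
  have key := free_lagrangian_polar (b := 2 * Real.pi) (r := r) (R := R)
    (F := fun s θ => h ((c s : ℂ) * Complex.exp ((θ : ℂ) * Complex.I)))
    (G := fun s θ => hθ (c s) θ) (K := fun s θ => hs (c s) θ)
    (τ := fun s => τ (c s)) (τ' := fun s => τ' (c s)) hrR.le ?_ ?_ ?_ ?_ ?_ ?_ ?_ ?_ ?_
  · have hR : R ∈ Icc r R := right_mem_Icc.2 hrR.le
    have hr' : r ∈ Icc r R := left_mem_Icc.2 hrR.le
    simp only [hce R hR, hce r hr'] at key
    rw [angular_boundary (hrs.trans hrsRs)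
        (fun θ => houter _ (hnorm R θ (hr.trans hrR).le)) hdeg_out,
      angular_boundary hrs (fun θ => hinner _ (hnorm r θ hr.le)) hdeg_in] at key
    refine Eq.trans ?_ (key.trans (by ring))
    refine intervalIntegral.integral_congr fun θ _ => intervalIntegral.integral_congr fun s hs' => ?_
    rw [uIcc_of_le hrR.le] at hs'
    simp only [hce s hs']
  · refine hC.continuousOn.comp_continuous
      (f := fun p : ℝ × ℝ => (c p.1 : ℂ) * Complex.exp ((p.2 : ℂ) * Complex.I))
      (by fun_prop) fun p => ?_
    have h1 := hcm p.1
    rw [mem_sdiff, mem_closedBall_zero_iff, mem_ball_zero_iff,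
      hnorm _ _ (hr.le.trans h1.1)]
    exact ⟨h1.2, not_lt.2 h1.1⟩
  · exact hθcont.comp_continuous (f := fun p : ℝ × ℝ => (c p.1, p.2)) (by fun_prop)
      fun p => ⟨hcm p.1, mem_univ _⟩
  · exact hscont.comp_continuous (f := fun p : ℝ × ℝ => (c p.1, p.2)) (by fun_prop)
      fun p => ⟨hcm p.1, mem_univ _⟩
  · exact fun s θ => hhθ (c s) (hcm s) θ
  · intro s hs' θ
    have h1 := (hhs s (Ioo_subset_Icc_self hs') θ).hasDerivAt (Icc_mem_nhds hs'.1 hs'.2)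
    simp only [hce s (Ioo_subset_Icc_self hs')]
    refine h1.congr_of_eventuallyEq ?_
    filter_upwards [hnear s hs'] with t ht
    rw [ht]
  · intro s
    simp
  · exact hτc.comp_continuous hcc hcm
  · exact hτ'c.comp_continuous hcc hcm
  · intro s hs'
    have h1 := (hτd s (Ioo_subset_Icc_self hs')).hasDerivAt (Icc_mem_nhds hs'.1 hs'.2)
    simp only [hce s (Ioo_subset_Icc_self hs')]
    refine h1.congr_of_eventuallyEq ?_
    filter_upwards [hnear s hs'] with t ht
    rw [ht]
end
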